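/- Fix d ≥ 1, let c_d > 0, and let Γ : ℝ^d → ℝ be a measurable function with 0 ≤ Γ(z) ≤ 1 and 1 − Γ(z) ≤ c_d‖z‖₂² for all z ∈ ℝ^d. Define the pseudometric d_Γ(f,g) = (2∫₀ᵗ (1 − Γ(f(s) − g(s))) ds)^{1/2} on continuous functions [0,t] → ℝ^d. Then there exist constants c₁ > 1 and c₂ > 0 (depending only on d and c_d) such that for every t > 0, C > 0, and ε > 0, the Cameron–Martin ball H_t(C) = { f : [0,t] → ℝ^d absolutely continuous, f(0) = 0, (∫₀ᵗ ‖f'‖₂²)^{1/2} ≤ C } can be covered by at most c₁ · exp(c₂ · C t / ε) balls of radius ε in the pseudometric d_Γ. -/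

import Mathlib

open Real MeasureTheory

/-- The Cameron–Martin ball `H_t(C)`. -/
def CMBall (d : ℕ) (T R : ℝ) : Set (ℝ → EuclideanSpace ℝ (Fin d)) :=
  {f | f 0 = 0 ∧ ∃ f' : ℝ → EuclideanSpace ℝ (Fin d),
      IntervalIntegrable f' MeasureTheory.volume 0 T ∧
      IntervalIntegrable (fun s => ‖f' s‖ ^ 2) MeasureTheory.volume 0 T ∧
      (∀ s ∈ Set.Icc (0:ℝ) T, f s = ∫ u in (0:ℝ)..s, f' u) ∧
      Real.sqrt (∫ s in (0:ℝ)..T, ‖f' s‖ ^ 2) ≤ R}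

/-- The canonical pseudometric of the Gaussian field with correlation `Γ`. -/
noncomputable def dGamma (d : ℕ) (t : ℝ) (Γ : EuclideanSpace ℝ (Fin d) → ℝ)
    (f g : ℝ → EuclideanSpace ℝ (Fin d)) : ℝ :=
  Real.sqrt (2 * ∫ s in (0:ℝ)..t, (1 - Γ (f s - g s)))

lemma aux_geo (M : ℕ) :
    ∑ k ∈ Finset.Icc (-(M:ℤ)) M, ((1:ℝ)/2) ^ k.natAbs = 3 - 2 * (1/2)^M := by
  induction M with
  | zero => norm_num
  | succ M ih =>
    have : Finset.Icc (-((M+1:ℕ):ℤ)) ((M+1:ℕ):ℤ)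
        = insert (-((M+1:ℕ):ℤ)) (insert ((M+1:ℕ):ℤ) (Finset.Icc (-(M:ℤ)) M)) := by
      ext x; simp only [Finset.mem_insert, Finset.mem_Icc]; omega
    rw [this, Finset.sum_insert, Finset.sum_insert, ih, Int.natAbs_neg, Int.natAbs_natCast, pow_succ]
    · ring
    · simp
    · simp only [Finset.mem_insert, Finset.mem_Icc]; omega

lemma aux_count {ι : Type} [Fintype ι] [DecidableEq ι] (K : ℕ) :
    ∃ S : Finset (ι → ℤ), (S.card : ℝ) ≤ 2 ^ K * 3 ^ (Fintype.card ι) ∧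
      ∀ m : ι → ℤ, ∑ i, (m i).natAbs ≤ K → m ∈ S := by
  classical
  let B : Finset (ι → ℤ) := Fintype.piFinset (fun _ => Finset.Icc (-(K:ℤ)) K)
  refine ⟨B.filter (fun m => ∑ i, (m i).natAbs ≤ K), ?_, ?_⟩
  · have h1 : ((B.filter (fun m => ∑ i, (m i).natAbs ≤ K)).card : ℝ)
        ≤ ∑ m ∈ B, 2 ^ K * ∏ i, ((1:ℝ)/2) ^ (m i).natAbs := by
      rw [Finset.card_eq_sum_ones]
      push_cast
      calc _ ≤ ∑ m ∈ B.filter (fun m => ∑ i, (m i).natAbs ≤ K),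
            2 ^ K * ∏ i, ((1:ℝ)/2) ^ (m i).natAbs := by
            apply Finset.sum_le_sum
            intro m hm
            have hm := (Finset.mem_filter.1 hm).2
            rw [Finset.prod_pow_eq_pow_sum]
            have : ((1:ℝ)/2)^K ≤ (1/2)^(∑ i, (m i).natAbs) :=
              pow_le_pow_of_le_one (by norm_num) (by norm_num) hm
            calc (1:ℝ) = 2^K * (1/2)^K := by rw [← mul_pow]; norm_num
              _ ≤ _ := by gcongr
        _ ≤ _ := by
            apply Finset.sum_le_sum_of_subset_of_nonneg (Finset.filter_subset _ _)
            intros; positivity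
    refine h1.trans ?_
    rw [← Finset.mul_sum]
    have h2 : ∑ m ∈ B, ∏ i, ((1:ℝ)/2) ^ (m i).natAbs
        = ∏ _i : ι, ∑ k ∈ Finset.Icc (-(K:ℤ)) K, ((1:ℝ)/2) ^ k.natAbs := by
      rw [Finset.prod_univ_sum]
    rw [h2, aux_geo, Finset.prod_const, Finset.card_univ]
    have h3 : ((1:ℝ)/2)^K ≤ 1 := pow_le_one₀ (by norm_num) (by norm_num)
    have h4 : (0:ℝ) < (1/2)^K := by positivity
    gcongr
    · linarith
    · linarith
  · intro m hm
    simp only [B, Finset.mem_filter, Fintype.mem_piFinset, Finset.mem_Icc]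
    refine ⟨fun i => ?_, hm⟩
    have := Finset.single_le_sum (f := fun i => (m i).natAbs) (fun _ _ => Nat.zero_le _) (Finset.mem_univ i)
    omega

lemma aux_cs {E : Type*} [NormedAddCommGroup E] [NormedSpace ℝ E] (f : ℝ → E) (a b : ℝ)
    (hab : a < b) (h1 : IntervalIntegrable f volume a b)
    (h2 : IntervalIntegrable (fun s => ‖f s‖ ^ 2) volume a b) :
    ‖∫ u in a..b, f u‖ ^ 2 ≤ (b - a) * ∫ u in a..b, ‖f u‖ ^ 2 := by
  set B := ∫ u in a..b, ‖f u‖ with hB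
  set A := ∫ u in a..b, ‖f u‖ ^ 2 with hA
  have hL : 0 < b - a := sub_pos.2 hab
  have hle : ‖∫ u in a..b, f u‖ ≤ B := intervalIntegral.norm_integral_le_integral_norm hab.le
  have h0 : 0 ≤ ∫ u in a..b, (‖f u‖ - B / (b - a)) ^ 2 :=
    intervalIntegral.integral_nonneg hab.le (fun u _ => sq_nonneg _)
  have he : ∫ u in a..b, (‖f u‖ - B / (b - a)) ^ 2
      = A - 2 * (B / (b-a)) * B + (b - a) * (B / (b-a))^2 := by
    have : ∀ u, (‖f u‖ - B / (b - a)) ^ 2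
        = ‖f u‖^2 - (2 * (B / (b-a))) * ‖f u‖ + (B / (b-a))^2 := fun u => by ring
    simp_rw [this]
    rw [intervalIntegral.integral_add (h2.sub (h1.norm.const_mul _)) intervalIntegrable_const,
      intervalIntegral.integral_sub h2 (h1.norm.const_mul _),
      intervalIntegral.integral_const_mul, intervalIntegral.integral_const, smul_eq_mul]
  have h3 : (b - a) * (A - 2 * (B / (b-a)) * B + (b - a) * (B / (b-a))^2) = (b-a) * A - B^2 := by
    field_simp; ring
  have h4 : 0 ≤ (b-a) * A - B^2 := by
    rw [← h3, ← he]; positivity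
  have : ‖∫ u in a..b, f u‖ ^ 2 ≤ B ^ 2 := by gcongr
  linarith

/-- step function -/
noncomputable def stepF (d n : ℕ) (h δ : ℝ) (m : Fin n × Fin d → ℤ) (s : ℝ) :
    EuclideanSpace ℝ (Fin d) :=
  WithLp.toLp 2 (fun a => δ * ((∑ j : Fin n, if (j:ℕ) < ⌊s / h⌋₊ then m (j, a) else 0 : ℤ) : ℝ))

lemma aux_tele (n i : ℕ) (hi : i ≤ n) (q : ℕ → ℤ) (h0 : q 0 = 0) :
    (∑ j : Fin n, if (j:ℕ) < i then q (j+1) - q j else 0) = q i := by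
  rw [Fin.sum_univ_eq_sum_range (fun j => if j < i then q (j+1) - q j else 0) n,
    ← Finset.sum_filter]
  have : (Finset.range n).filter (· < i) = Finset.range i := by
    ext x; simp; omega
  rw [this, Finset.sum_range_sub, h0, sub_zero]

lemma aux_floor (x y : ℝ) : ((⌊x⌋ - ⌊y⌋).natAbs : ℝ) ≤ (x - y)^2 + 2 := by
  rw [Nat.cast_natAbs]
  push_cast
  have := Int.floor_le x
  have := Int.floor_le y
  have := Int.lt_floor_add_one x
  have := Int.lt_floor_add_one y
  rw [abs_le]
  constructor <;> nlinarith [sq_nonneg (x - y - 1), sq_nonneg (x-y+1)]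

/-- deterministic approximation -/
lemma aux_approx (d n : ℕ) (hn : 1 ≤ n) (t C h δ : ℝ) (ht : 0 < t) (hC : 0 < C)
    (hδ : 0 < δ) (hh : h = t / n) (f : ℝ → EuclideanSpace ℝ (Fin d)) (hf : f ∈ CMBall d t C) :
    ∃ m : Fin n × Fin d → ℤ,
      ((∑ p, (m p).natAbs : ℕ) : ℝ) ≤ h * C^2 / δ^2 + 2 * (n * d) ∧
      ∃ A : ℕ → ℝ, ∑ i ∈ Finset.range n, A i ≤ C^2 ∧
        ∀ i < n, ∀ s ∈ Set.Ioo (i * h) ((i+1) * h),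
          ‖f s - stepF d n h δ m s‖^2 ≤ 2 * h * A i + 2 * d * δ^2 := by
  obtain ⟨hf0, f', hi1, hi2, hfi, hR⟩ := hf
  have hn0 : (0:ℝ) < n := by exact_mod_cast hn
  have hh0 : 0 < h := by rw [hh]; positivity
  have hnh : n * h = t := by rw [hh]; field_simp
  let A : ℕ → ℝ := fun i => ∫ u in (i * h)..((i+1 : ℕ) * h), ‖f' u‖^2
  have hsub : ∀ a b, 0 ≤ a → a ≤ b → b ≤ t → Set.uIcc a b ⊆ Set.uIcc 0 t := by
    intro a b h1 h2 h3
    rw [Set.uIcc_of_le h2, Set.uIcc_of_le ht.le]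
    exact Set.Icc_subset_Icc h1 h3
  have hpt : ∀ i : ℕ, i ≤ n → (i:ℝ) * h ≤ t := by
    intro i hi
    rw [← hnh]
    have : (i:ℝ) ≤ n := by exact_mod_cast hi
    gcongr
  have hp0 : ∀ i : ℕ, 0 ≤ (i:ℝ) * h := fun i => by positivity
  have hAsum : ∑ i ∈ Finset.range n, A i ≤ C^2 := by
    have : ∑ i ∈ Finset.range n, A i = ∫ u in ((0:ℕ) * h)..((n:ℕ) * h), ‖f' u‖^2 := by
      apply intervalIntegral.sum_integral_adjacent_intervals (a := fun i : ℕ => (i:ℝ) * h)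
      intro k hk
      refine hi2.mono_set (hsub _ _ (hp0 _) ?_ (hpt _ hk))
      push_cast; nlinarith
    rw [this, hnh]
    simp only [Nat.cast_zero, zero_mul]
    exact (Real.sqrt_le_left hC.le).1 hR
  have hdiff : ∀ a b, 0 ≤ a → a < b → b ≤ t →
      ‖f b - f a‖^2 ≤ (b - a) * ∫ u in a..b, ‖f' u‖^2 := by
    intro a b h1 h2 h3
    have e : f b - f a = ∫ u in a..b, f' u := by
      rw [hfi b ⟨h1.trans h2.le, h3⟩, hfi a ⟨h1, h2.le.trans h3⟩]
      apply intervalIntegral.integral_interval_sub_left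
      · exact hi1.mono_set (hsub _ _ le_rfl (h1.trans h2.le) h3)
      · exact hi1.mono_set (hsub _ _ le_rfl h1 (h2.le.trans h3))
    rw [e]
    exact aux_cs f' a b h2 (hi1.mono_set (hsub _ _ h1 h2.le h3)) (hi2.mono_set (hsub _ _ h1 h2.le h3))
  let q : ℕ → Fin d → ℤ := fun i a => ⌊f (i * h) a / δ⌋
  let m : Fin n × Fin d → ℤ := fun p => q (p.1 + 1) p.2 - q p.1 p.2
  refine ⟨m, ?_, A, hAsum, ?_⟩
  · push_cast
    rw [Fintype.sum_prod_type]
    have hstep : ∀ i : Fin n, ∑ a : Fin d, ((m (i, a)).natAbs : ℝ) ≤ h * A i / δ^2 + 2 * d := by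
      intro i
      calc ∑ a : Fin d, ((m (i, a)).natAbs : ℝ)
          ≤ ∑ a : Fin d, (((f ((i+1:ℕ) * h) - f ((i:ℕ) * h)) a)^2 / δ^2 + 2) := by
            apply Finset.sum_le_sum
            intro a _
            refine (aux_floor _ _).trans (le_of_eq ?_)
            rw [PiLp.sub_apply, ← sub_div, div_pow]
        _ = ‖f ((i+1:ℕ) * h) - f ((i:ℕ) * h)‖^2 / δ^2 + 2 * d := by
            rw [Finset.sum_add_distrib, ← Finset.sum_div, EuclideanSpace.real_norm_sq_eq]
            simp [mul_comm]
        _ ≤ _ := by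
            have := hdiff ((i:ℕ) * h) ((i+1:ℕ) * h) (hp0 _) (by push_cast; nlinarith) (hpt _ i.2)
            have e : ((i+1:ℕ):ℝ) * h - (i:ℕ) * h = h := by push_cast; ring
            rw [e] at this
            gcongr
    calc _ ≤ ∑ i : Fin n, (h * A i / δ^2 + 2 * d) := Finset.sum_le_sum (fun i _ => hstep i)
      _ = h * (∑ i ∈ Finset.range n, A i) / δ^2 + 2 * (n * d) := by
        rw [Finset.sum_add_distrib, ← Finset.sum_div, ← Finset.mul_sum,
          Fin.sum_univ_eq_sum_range A n]
        simp; ring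
      _ ≤ _ := by gcongr
  · intro i hi s hs
    have hfl : ⌊s / h⌋₊ = i := by
      rw [Nat.floor_eq_iff (div_nonneg ((hp0 i).trans hs.1.le) hh0.le)]
      constructor
      · rw [le_div_iff₀ hh0]; exact hs.1.le
      · rw [div_lt_iff₀ hh0]; exact hs.2
    have hst : ∀ a, stepF d n h δ m s a = δ * (q i a : ℝ) := by
      intro a
      simp only [stepF, hfl, m]
      congr 2
      apply aux_tele n i hi.le (fun i => q i a)
      simp [q, hf0]
    have hs1 : (i+1) * h ≤ t := by exact_mod_cast hpt (i+1) hi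
    have b1 : ‖f s - f (i * h)‖^2 ≤ h * A i := by
      refine (hdiff _ _ (hp0 i) hs.1 (hs.2.le.trans hs1)).trans ?_
      have : ∫ u in (i * h)..s, ‖f' u‖^2 ≤ A i := by
        apply intervalIntegral.integral_mono_interval le_rfl hs.1.le (by push_cast; exact hs.2.le)
        · exact Filter.Eventually.of_forall (fun u => sq_nonneg _)
        · exact hi2.mono_set (hsub _ _ (hp0 i) (by push_cast; nlinarith) (hpt _ hi))
      have h0 : 0 ≤ ∫ u in (i * h)..s, ‖f' u‖^2 :=
        intervalIntegral.integral_nonneg hs.1.le (fun u _ => sq_nonneg _)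
      have := hs.2
      apply mul_le_mul _ ‹_› h0 hh0.le
      linarith
    have b2 : ‖f (i * h) - stepF d n h δ m s‖^2 ≤ d * δ^2 := by
      rw [EuclideanSpace.real_norm_sq_eq]
      calc _ ≤ ∑ a : Fin d, δ^2 := by
            apply Finset.sum_le_sum
            intro a _
            rw [PiLp.sub_apply, hst]
            have e : f (i * h) a - δ * (q i a : ℝ) = δ * Int.fract (f (i * h) a / δ) := by
              rw [← Int.self_sub_floor]
              simp only [q]
              field_simp
            rw [e, mul_pow]
            have := Int.fract_nonneg (f (i * h) a / δ)
            have := Int.fract_lt_one (f (i * h) a / δ)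
            have : (Int.fract (f (i * h) a / δ))^2 ≤ 1 := by nlinarith
            nlinarith [sq_nonneg δ]
        _ = _ := by simp
    have tri := norm_add_le (f s - f (i * h)) (f (i * h) - stepF d n h δ m s)
    rw [sub_add_sub_cancel] at tri
    have tri2 := pow_le_pow_left₀ (norm_nonneg _) tri 2
    nlinarith [sq_nonneg (‖f s - f (i * h)‖ - ‖f (i * h) - stepF d n h δ m s‖)]

/-- Lemma 2 of the paper: there are constants `c₁ > 1`, `c₂ > 0`
depending only on `d` and `c_d` such that for every correlation `Γ` with
`0 ≤ Γ ≤ 1` and `1 − Γ(z) ≤ c_d ‖z‖²`, and all `t, C, ε > 0`, the ball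
`H_t(C)` admits an `ε`-net in `d_Γ` of cardinality at most
`c₁ · exp(c₂ C t / ε)`. -/
theorem stmt6 (d : ℕ) (hd : 1 ≤ d) (cd : ℝ) (hcd : 0 < cd) :
    ∃ c₁ c₂ : ℝ, 1 < c₁ ∧ 0 < c₂ ∧
      ∀ Γ : EuclideanSpace ℝ (Fin d) → ℝ, Measurable Γ →
        (∀ z, 0 ≤ Γ z) → (∀ z, Γ z ≤ 1) → (∀ z, 1 - Γ z ≤ cd * ‖z‖ ^ 2) →
        ∀ t C ε : ℝ, 0 < t → 0 < C → 0 < ε →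
          ∃ S : Finset (ℝ → EuclideanSpace ℝ (Fin d)),
            (S.card : ℝ) ≤ c₁ * Real.exp (c₂ * C * t / ε) ∧
            ∀ f ∈ CMBall d t C, ∃ k ∈ S, dGamma d t Γ f k ≤ ε := by
  classical
  have hd0 : (0:ℝ) < d := by exact_mod_cast hd
  set r := √(8 * cd) with hr
  have hr0 : 0 < r := Real.sqrt_pos.2 (by positivity)
  have hr2 : r^2 = 8 * cd := Real.sq_sqrt (by positivity)
  have hl : 0 < Real.log 24 := Real.log_pos (by norm_num)
  refine ⟨24 ^ d, Real.log 24 * d * r, one_lt_pow₀ (by norm_num) (by omega), by positivity, ?_⟩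
  intro Γ _ _ hΓ1 hΓ t C ε ht hC hε
  set x := r * C * t / ε with hx
  have hx0 : 0 < x := by positivity
  set n := ⌈x⌉₊ with hn
  have hn1 : 1 ≤ n := Nat.ceil_pos.2 hx0
  have hn0 : (0:ℝ) < n := by exact_mod_cast hn1
  have hxn : x ≤ n := Nat.le_ceil x
  have hnx : (n:ℝ) ≤ x + 1 := (Nat.ceil_lt_add_one hx0.le).le
  set h := t / n with hh
  have hh0 : 0 < h := by positivity
  have hnh : n * h = t := by rw [hh]; field_simp
  set δ := ε / (r * √(d * t)) with hδ
  have hdt : (√(d * t))^2 = d * t := Real.sq_sqrt (by positivity)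
  have hdt0 : 0 < √(d * t) := Real.sqrt_pos.2 (by positivity)
  have hδ0 : 0 < δ := by positivity
  have hδ2 : δ^2 = ε^2 / (8 * cd * (d * t)) := by rw [hδ, div_pow, mul_pow, hr2, hdt]
  have hhC : h * C * r ≤ ε := by
    have : x * ε = r * C * t := by rw [hx]; field_simp
    have e : h * C * r = x * ε / n := by rw [this, hh]; ring
    rw [e, div_le_iff₀ hn0]
    nlinarith
  obtain ⟨S, hS, hSm⟩ := aux_count (ι := Fin n × Fin d) (3 * (n * d))
  refine ⟨S.image (stepF d n h δ), ?_, ?_⟩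
  · have c1 : ((S.image (stepF d n h δ)).card : ℝ) ≤ S.card := by
      exact_mod_cast Finset.card_image_le
    refine c1.trans (hS.trans ?_)
    rw [Fintype.card_prod, Fintype.card_fin, Fintype.card_fin, pow_mul, ← mul_pow]
    norm_num
    have e24 : (24:ℝ) = Real.exp (Real.log 24) := (Real.exp_log (by norm_num)).symm
    have : (24:ℝ)^(n*d) = Real.exp ((n*d) * Real.log 24) := by
      conv_lhs => rw [e24]
      rw [← Real.exp_nat_mul]; push_cast; rfl
    rw [this]
    have : (24:ℝ)^d = Real.exp (d * Real.log 24) := by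
      conv_lhs => rw [e24]
      rw [← Real.exp_nat_mul]
    rw [this, ← Real.exp_add]
    apply Real.exp_le_exp.2
    have e : Real.log 24 * d * r * C * t / ε = Real.log 24 * d * x := by rw [hx]; ring
    rw [e]
    have : 0 < Real.log 24 * d := by positivity
    nlinarith
  · intro f hf
    obtain ⟨m, hm, A, hA, hfA⟩ := aux_approx d n hn1 t C h δ ht hC hδ0 hh f hf
    refine ⟨stepF d n h δ m, Finset.mem_image_of_mem _ (hSm m ?_), ?_⟩
    · have : h * C^2 / δ^2 ≤ n * d := by
        rw [hδ2, div_le_iff₀ (by positivity), ← hr2]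
        have e : n * d * (ε ^ 2 / (r^2 * (d * t))) = n * ε^2 / (r^2 * t) := by field_simp
        rw [e, le_div_iff₀ (by positivity)]
        have : x * ε = r * C * t := by rw [hx]; field_simp
        calc h * C^2 * (r^2 * t) = (h * C * r) * (r * C * t) := by ring
          _ ≤ ε * (x * ε) := by rw [this]; gcongr
          _ ≤ ε * (n * ε) := by gcongr
          _ = _ := by ring
      have : ((∑ p, (m p).natAbs : ℕ) : ℝ) ≤ ((3 * (n * d) : ℕ) : ℝ) := by
        refine hm.trans ?_
        push_cast; linarith
      exact_mod_cast this
    · unfold dGamma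
      apply Real.sqrt_le_iff.2 ⟨hε.le, ?_⟩
      set g : ℝ → ℝ := fun s => 1 - Γ (f s - stepF d n h δ m s) with hg
      change 2 * ∫ s in (0:ℝ)..t, g s ≤ ε^2
      by_cases hint : IntervalIntegrable g volume 0 t
      swap
      · rw [intervalIntegral.integral_undef hint]; simp; positivity
      have hsubint : ∀ k < n, IntervalIntegrable g volume ((k:ℕ) * h) ((k+1:ℕ) * h) := by
        intro k hk
        apply hint.mono_set
        have h2 : (k:ℝ) * h ≤ ((k+1:ℕ):ℝ) * h := by gcongr; omega
        rw [Set.uIcc_of_le h2, Set.uIcc_of_le ht.le]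
        apply Set.Icc_subset_Icc (by positivity)
        rw [← hnh]; gcongr; omega
      have hsum : ∑ i ∈ Finset.range n, ∫ s in ((i:ℕ) * h)..((i+1:ℕ) * h), g s
          = ∫ s in (0:ℝ)..t, g s := by
        have := intervalIntegral.sum_integral_adjacent_intervals (a := fun i : ℕ => (i:ℝ) * h)
          (n := n) hsubint
        rw [this]
        simp [hnh]
      rw [← hsum]
      have hb : ∀ i ∈ Finset.range n, ∫ s in ((i:ℕ) * h)..((i+1:ℕ) * h), g s
          ≤ h * (cd * (2 * h * A i + 2 * d * δ^2)) := by
        intro i hi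
        have hi := Finset.mem_range.1 hi
        have h2 : (i:ℝ) * h ≤ ((i+1:ℕ):ℝ) * h := by gcongr; omega
        calc _ ≤ ∫ s in ((i:ℕ) * h)..((i+1:ℕ) * h), (cd * (2 * h * A i + 2 * d * δ^2)) := by
              apply intervalIntegral.integral_mono_on_of_le_Ioo h2 (hsubint i hi)
                intervalIntegrable_const
              intro s hs
              refine (hΓ _).trans ?_
              gcongr
              apply hfA i hi s
              exact_mod_cast hs
          _ = _ := by
              rw [intervalIntegral.integral_const, smul_eq_mul]
              push_cast; ring
      have hb2 := Finset.sum_le_sum hb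
      have e : ∑ i ∈ Finset.range n, h * (cd * (2 * h * A i + 2 * d * δ^2))
          = 2 * cd * h^2 * (∑ i ∈ Finset.range n, A i) + 2 * cd * (d * δ^2 * (n * h)) := by
        rw [Finset.mul_sum]
        have : ∀ i ∈ Finset.range n, h * (cd * (2 * h * A i + 2 * d * δ^2))
          = 2 * cd * h^2 * A i + 2 * cd * d * δ^2 * h := fun i _ => by ring
        rw [Finset.sum_congr rfl this, Finset.sum_add_distrib]
        simp; ring
      rw [e, hnh] at hb2
      have e1 : 2 * cd * (d * δ^2 * t) = ε^2 / 4 := by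
        rw [hδ2]; field_simp; norm_num
      have e2 : 2 * cd * h^2 * (∑ i ∈ Finset.range n, A i) ≤ ε^2 / 4 := by
        calc _ ≤ 2 * cd * h^2 * C^2 := by gcongr
          _ = (h * C * r)^2 / 4 := by rw [mul_pow, hr2]; ring
          _ ≤ _ := by gcongr
      linarith
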